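/- For every fixed r ∈ (0, π/2), as t → 0⁺ one has the small-time asymptotics p_t(r, 0) ~ (r / sin r) · (1 - r·cot r)^{-1/2} · (√π / (4 t^{3/2})) · e^{-r²/(4t)}; that is, lim_{t→0⁺} p_t(r, 0) · (4 t^{3/2} / √π) · e^{r²/(4t)} = (r / sin r) · (1 - r·cot r)^{-1/2}. -/

import Mathlib

open Real

/-- The Jacobi polynomial `P_k^{0,m}` defined by the Rodrigues-type formula. -/
noncomputable def jacobiP (k m : ℕ) (x : ℝ) : ℝ :=
  ((-1 : ℝ) ^ k / (2 ^ k * (Nat.factorial k : ℝ) * (1 + x) ^ m)) *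
    iteratedDeriv k (fun y : ℝ => (1 + y) ^ m * (1 - y ^ 2) ^ k) x

/-- The general term of the double series defining the subelliptic heat kernel on `SU(2)`. -/
noncomputable def heatTerm (t r z : ℝ) (n : ℤ) (k : ℕ) : ℂ :=
  (((2 * (k : ℝ) + (n.natAbs : ℝ) + 1) *
      Real.exp (-(4 * (k : ℝ) * ((k : ℝ) + (n.natAbs : ℝ) + 1) + 2 * (n.natAbs : ℝ)) * t) *
      (Real.cos r) ^ n.natAbs * jacobiP k n.natAbs (Real.cos (2 * r)) : ℝ) : ℂ) *
    Complex.exp ((n : ℂ) * (z : ℂ) * Complex.I)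

/-- The subelliptic heat kernel `p_t(r,z)` on `SU(2)` in cylindric coordinates
(the double series is real-valued). -/
noncomputable def heatP (t r z : ℝ) : ℝ := (∑' n : ℤ, ∑' k : ℕ, heatTerm t r z n k).re

/-!
The series for `p_t(r, 0)` runs over the weight vectors `x ^ i * y ^ j` of the irreducible
representations of `SU(2)`, and each Jacobi polynomial is a diagonal matrix entry of a symmetric
power. Writing the part of the exponential that depends on the weight `i - j` as a Gaussian
integral turns the sum over each representation into its character, a Chebyshev polynomial, so

`√(4πt) p_t(r, 0) = ∫ exp (-y² / 4t) K_t (cos r cosh y) dy`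

with `K_t` the Riemannian heat kernel of `SU(2)`. By the functional equation of the theta function,
`K_t (cos δ)` is `e ^ t √(π/t) / (4t) * exp (-δ² / 4t) δ / sin δ` up to exponentially small
relative error, and this persists for imaginary `δ`. What remains is Laplace's method for the phase
`y² + δ² - r²`, where `cos δ = cos r cosh y`: its only zero is `y = 0`, where it behaves like
`(1 - r cot r) y²`. The quantitative lower bound needed for domination comes from
`cosh y ≤ exp (y² / 2)` and the convexity of `-log cos v - v² / 2`.
-/

open Filter MeasureTheory Topology
open Finset.HasAntidiagonal (antidiagonal)

section SymmetricPowers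

open Polynomial

variable {R : Type*} [CommRing R]

/-- The bilinear form `(p, q) ↦ ∑ s, w ^ s * p_s * q_s` on polynomials. -/
noncomputable def weightedCoeffForm (w : R) : R[X] →ₗ[R] R[X] →ₗ[R] R :=
  Polynomial.lsum fun s => LinearMap.toSpanSingleton R (R[X] →ₗ[R] R) (w ^ s • lcoeff R s)

/-- The diagonal entry at `x ^ i * y ^ j` of the `(i + j)`-th symmetric power of a matrix
`!![a, b; c, d]` with `b * c = w`, that is, the coefficient of `x ^ i * y ^ j` in
`(a * x + b * y) ^ i * (c * x + d * y) ^ j`. -/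
noncomputable def symPowDiag (a d w : R) (i j : ℕ) : R :=
  weightedCoeffForm w ((X + C a) ^ i) ((X + C d) ^ j)

lemma weightedCoeffForm_apply (w : R) (p q : R[X]) {N : ℕ} (hN : p.natDegree < N) :
    weightedCoeffForm w p q = ∑ s ∈ Finset.range N, w ^ s * p.coeff s * q.coeff s := by
  rw [weightedCoeffForm, Polynomial.lsum_apply, p.sum_over_range' (fun _ => map_zero _) N hN,
    LinearMap.sum_apply]
  refine Finset.sum_congr rfl fun s _ => ?_
  simp only [LinearMap.toSpanSingleton_apply, LinearMap.smul_apply, lcoeff_apply, smul_eq_mul]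
  ring

lemma weightedCoeffForm_X_mul_X_mul (w : R) (p q : R[X]) :
    weightedCoeffForm w (X * p) (X * q) = w * weightedCoeffForm w p q := by
  rw [weightedCoeffForm_apply w p q (Nat.lt_succ_self _),
    weightedCoeffForm_apply w (X * p) (X * q) (N := p.natDegree + 1 + 1)
      (Nat.lt_succ_of_le ((natDegree_mul_le.trans (Nat.add_le_add_right natDegree_X_le _)).trans
        (Nat.add_comm _ _).le)),
    Finset.sum_range_succ', Finset.mul_sum]
  simp only [coeff_X_mul, coeff_X_mul_zero, mul_zero, add_zero]
  exact Finset.sum_congr rfl fun s _ => by ring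

lemma weightedCoeffForm_comm (w : R) (p q : R[X]) :
    weightedCoeffForm w p q = weightedCoeffForm w q p := by
  have hp : p.natDegree < p.natDegree + q.natDegree + 1 := by omega
  have hq : q.natDegree < p.natDegree + q.natDegree + 1 := by omega
  rw [weightedCoeffForm_apply w p q hp, weightedCoeffForm_apply w q p hq]
  exact Finset.sum_congr rfl fun s _ => by ring

lemma symPowDiag_comm (a d w : R) (i j : ℕ) : symPowDiag a d w i j = symPowDiag d a w j i :=
  weightedCoeffForm_comm w _ _

lemma symPowDiag_eq_sum (a d w : R) (i j : ℕ) :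
    symPowDiag a d w i j = ∑ s ∈ Finset.range (i + 1),
      w ^ s * (a ^ (i - s) * i.choose s) * (d ^ (j - s) * j.choose s) := by
  have hdeg : ((X + C a) ^ i).natDegree < i + 1 :=
    Nat.lt_succ_of_le <| (natDegree_pow_le_of_le i <|
      (natDegree_add_C (a := a)).trans_le natDegree_X_le).trans (mul_one i).le
  rw [symPowDiag, weightedCoeffForm_apply w _ _ hdeg]
  simp only [coeff_X_add_C_pow]

lemma symPowDiag_zero_left (a d w : R) (j : ℕ) : symPowDiag a d w 0 j = d ^ j := by
  simp [symPowDiag_eq_sum]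

lemma symPowDiag_zero_right (a d w : R) (i : ℕ) : symPowDiag a d w i 0 = a ^ i := by
  rw [symPowDiag_comm, symPowDiag_zero_left]

lemma symPowDiag_succ_succ (a d w : R) (i j : ℕ) :
    symPowDiag a d w (i + 1) (j + 1) = a * symPowDiag a d w i (j + 1) +
      d * symPowDiag a d w (i + 1) j - (a * d - w) * symPowDiag a d w i j := by
  simp only [symPowDiag, pow_succ', add_mul, map_add, LinearMap.add_apply, ← smul_eq_C_mul,
    map_smul, LinearMap.smul_apply, weightedCoeffForm_X_mul_X_mul, smul_eq_mul]
  ring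

lemma sum_antidiagonal_symPowDiag_add_two (a d w : R) (m : ℕ) :
    ∑ p ∈ antidiagonal (m + 2), symPowDiag a d w p.1 p.2 =
      (a + d) * ∑ p ∈ antidiagonal (m + 1), symPowDiag a d w p.1 p.2 -
        (a * d - w) * ∑ p ∈ antidiagonal m, symPowDiag a d w p.1 p.2 := by
  have split_left : ∑ p ∈ antidiagonal (m + 1), symPowDiag a d w p.1 p.2 =
      d ^ (m + 1) + ∑ p ∈ antidiagonal m, symPowDiag a d w (p.1 + 1) p.2 := by
    rw [Finset.Nat.sum_antidiagonal_succ, symPowDiag_zero_left]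
  have split_right : ∑ p ∈ antidiagonal (m + 1), symPowDiag a d w p.1 p.2 =
      a ^ (m + 1) + ∑ p ∈ antidiagonal m, symPowDiag a d w p.1 (p.2 + 1) := by
    rw [Finset.Nat.sum_antidiagonal_succ', symPowDiag_zero_right, add_comm]
  have interior : ∑ p ∈ antidiagonal m, symPowDiag a d w (p.1 + 1) (p.2 + 1) =
      a * ∑ p ∈ antidiagonal m, symPowDiag a d w p.1 (p.2 + 1) +
        d * ∑ p ∈ antidiagonal m, symPowDiag a d w (p.1 + 1) p.2 -
          (a * d - w) * ∑ p ∈ antidiagonal m, symPowDiag a d w p.1 p.2 := by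
    simp only [symPowDiag_succ_succ, Finset.sum_sub_distrib, Finset.sum_add_distrib,
      ← Finset.mul_sum]
  rw [Finset.Nat.sum_antidiagonal_succ, Finset.Nat.sum_antidiagonal_succ', interior,
    symPowDiag_zero_left, symPowDiag_zero_right]
  linear_combination -(a * split_right) - d * split_left

/-- The left-hand side is the character of the `m`-th symmetric power of `SL₂`. -/
theorem sum_antidiagonal_symPowDiag_eq_eval_U {a d w x : R} (htrace : a + d = 2 * x)
    (hdet : a * d - w = 1) (m : ℕ) :
    ∑ p ∈ antidiagonal m, symPowDiag a d w p.1 p.2 = (Chebyshev.U R m).eval x := by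
  induction m using Nat.twoStepInduction with
  | zero => simp [symPowDiag_zero_left]
  | one =>
    simp [Finset.Nat.antidiagonal_succ, symPowDiag_zero_left, symPowDiag_zero_right,
      ← htrace, add_comm]
  | more m ih₀ ih₁ =>
    rw [sum_antidiagonal_symPowDiag_add_two, ih₀, ih₁, htrace, hdet]
    push_cast
    simp [Chebyshev.U_add_two]

lemma symPowDiag_mul_inv_mul {K : Type*} [Field K] {z : K} (hz : z ≠ 0) (a d w : K) (i j : ℕ) :
    symPowDiag (z * a) (z⁻¹ * d) w i j = z ^ ((i : ℤ) - j) * symPowDiag a d w i j := by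
  rw [symPowDiag_eq_sum, symPowDiag_eq_sum, Finset.mul_sum]
  refine Finset.sum_congr rfl fun s hs => ?_
  rcases lt_or_ge j s with hjs | hsj
  · simp [Nat.choose_eq_zero_of_lt hjs]
  · have hsi : s ≤ i := Nat.lt_succ_iff.1 (Finset.mem_range.1 hs)
    have hpow : z ^ ((i : ℤ) - j) = z ^ (i - s) * z⁻¹ ^ (j - s) := by
      rw [inv_pow, ← zpow_natCast, ← zpow_natCast, ← zpow_neg, ← zpow_add₀ hz]
      congr 1
      omega
    rw [hpow, mul_pow, mul_pow]
    ring

lemma choose_mul_pow_mul_one_sub_pow_le_one {c : ℝ} (hc₀ : 0 ≤ c) (hc₁ : c ≤ 1) (s N : ℕ) :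
    c ^ (N - s) * N.choose s * (1 - c) ^ s ≤ 1 := by
  rcases lt_or_ge N s with hNs | hsN
  · simp [Nat.choose_eq_zero_of_lt hNs]
  · have hε : 0 ≤ 1 - c := sub_nonneg.2 hc₁
    calc c ^ (N - s) * N.choose s * (1 - c) ^ s
        = (1 - c) ^ s * c ^ (N - s) * N.choose s := by ring
      _ ≤ ∑ m ∈ Finset.range (N + 1), (1 - c) ^ m * c ^ (N - m) * N.choose m :=
        Finset.single_le_sum (f := fun m => (1 - c) ^ m * c ^ (N - m) * (N.choose m : ℝ))
          (fun _ _ => by positivity) (Finset.mem_range.2 (Nat.lt_succ_of_le hsN))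
      _ = 1 := by rw [← add_pow, sub_add_cancel, one_pow]

lemma abs_symPowDiag_le_three_pow {c : ℝ} (hc₀ : 0 ≤ c) (hc₁ : c ≤ 1) (i j : ℕ) :
    |symPowDiag c c (c ^ 2 - 1) i j| ≤ 3 ^ i := by
  have hε : 0 ≤ 1 - c := sub_nonneg.2 hc₁
  have term_le (s : ℕ) :
      |(c ^ 2 - 1) ^ s * (c ^ (i - s) * i.choose s) * (c ^ (j - s) * j.choose s)| ≤
        (1 + c) ^ s * c ^ (i - s) * i.choose s := by
    have hfactor : |(c ^ 2 - 1) ^ s| = (1 + c) ^ s * (1 - c) ^ s := by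
      rw [abs_pow, abs_sub_comm, abs_of_nonneg (by nlinarith), ← mul_pow]
      ring
    rw [abs_mul, abs_mul, hfactor, abs_of_nonneg (by positivity : 0 ≤ c ^ (i - s) * i.choose s),
      abs_of_nonneg (by positivity : 0 ≤ c ^ (j - s) * j.choose s)]
    calc (1 + c) ^ s * (1 - c) ^ s * (c ^ (i - s) * i.choose s) * (c ^ (j - s) * j.choose s)
        = (1 + c) ^ s * c ^ (i - s) * i.choose s *
            (c ^ (j - s) * j.choose s * (1 - c) ^ s) := by ring
      _ ≤ (1 + c) ^ s * c ^ (i - s) * i.choose s :=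
        mul_le_of_le_one_right (by positivity)
          (choose_mul_pow_mul_one_sub_pow_le_one hc₀ hc₁ s j)
  calc |symPowDiag c c (c ^ 2 - 1) i j|
      ≤ ∑ s ∈ Finset.range (i + 1), (1 + c) ^ s * c ^ (i - s) * i.choose s := by
        rw [symPowDiag_eq_sum]
        exact (Finset.abs_sum_le_sum_abs _ _).trans (Finset.sum_le_sum fun s _ => term_le s)
    _ = ((1 + c) + c) ^ i := (add_pow _ _ _).symm
    _ ≤ 3 ^ i := by gcongr; linarith

end SymmetricPowers

section Jacobi

lemma iteratedDeriv_one_add_pow (N i : ℕ) (x : ℝ) :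
    iteratedDeriv i (fun y : ℝ => (1 + y) ^ N) x = N.descFactorial i * (1 + x) ^ (N - i) := by
  rw [congrFun (iteratedDeriv_comp_const_add i (fun y : ℝ => y ^ N) 1) x, iteratedDeriv_pow]

lemma iteratedDeriv_one_sub_pow (N i : ℕ) (x : ℝ) :
    iteratedDeriv i (fun y : ℝ => (1 - y) ^ N) x =
      (-1) ^ i * (N.descFactorial i * (1 - x) ^ (N - i)) := by
  rw [congrFun (iteratedDeriv_comp_const_sub i (fun y : ℝ => y ^ N) 1) x, iteratedDeriv_pow,
    smul_eq_mul]

lemma jacobiP_eq_sum (k m : ℕ) (x : ℝ) :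
    jacobiP k m x = (-1) ^ k / (2 ^ k * k.factorial * (1 + x) ^ m) *
      ∑ s ∈ Finset.range (k + 1), k.choose s * ((k + m).descFactorial s * (1 + x) ^ (k + m - s)) *
        ((-1) ^ (k - s) * (k.descFactorial (k - s) * (1 - x) ^ (k - (k - s)))) := by
  have hfun : (fun y : ℝ => (1 + y) ^ m * (1 - y ^ 2) ^ k) =
      (fun y : ℝ => (1 + y) ^ (k + m)) * fun y : ℝ => (1 - y) ^ k := by
    ext y
    rw [Pi.mul_apply, show 1 - y ^ 2 = (1 + y) * (1 - y) by ring, mul_pow, pow_add]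
    ring
  rw [jacobiP, hfun, iteratedDeriv_mul (by fun_prop) (by fun_prop)]
  simp only [iteratedDeriv_one_add_pow, iteratedDeriv_one_sub_pow]

theorem pow_mul_jacobiP_eq_symPowDiag {c : ℝ} (hc : c ≠ 0) (k m : ℕ) :
    c ^ m * jacobiP k m (2 * c ^ 2 - 1) = symPowDiag c c (c ^ 2 - 1) k (k + m) := by
  rw [jacobiP_eq_sum, symPowDiag_eq_sum, Finset.mul_sum, Finset.mul_sum]
  refine Finset.sum_congr rfl fun s hs => ?_
  obtain ⟨q, rfl⟩ := Nat.exists_eq_add_of_le (Nat.lt_succ_iff.1 (Finset.mem_range.1 hs))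
  have hchoose : ((s + q + m).descFactorial s : ℝ) = s.factorial * (s + q + m).choose s :=
    mod_cast Nat.descFactorial_eq_factorial_mul_choose _ _
  have hfactorial : (s.factorial : ℝ) * (s + q).descFactorial q = (s + q).factorial := by
    have := Nat.factorial_mul_descFactorial (Nat.le_add_left q s)
    rw [Nat.add_sub_cancel] at this
    exact_mod_cast this
  have hs₀ : (s.factorial : ℝ) ≠ 0 := by positivity
  have hq₀ : ((s + q).descFactorial q : ℝ) ≠ 0 :=
    right_ne_zero_of_mul (hfactorial.trans_ne (by positivity))
  have hsign : ((-1 : ℝ) ^ q) ^ 2 = 1 := by rw [← pow_mul, mul_comm, pow_mul, neg_one_sq, one_pow]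
  rw [Nat.add_sub_cancel_left, Nat.add_sub_cancel, show s + q + m - s = q + m by omega, hchoose,
    ← hfactorial, show 1 + (2 * c ^ 2 - 1) = 2 * c ^ 2 by ring,
    show 1 - (2 * c ^ 2 - 1) = 2 * (1 - c ^ 2) by ring, ← neg_sub 1 (c ^ 2), neg_pow (1 - c ^ 2) s]
  simp only [mul_pow, pow_add]
  field_simp
  rw [hsign]
  ring

end Jacobi

section SpectralSum

/-- The Riemannian heat kernel of `SU(2)` (with generator normalised to have eigenvalues
`-m * (m + 2)`) at an element of trace `2 * x`. -/
noncomputable def riemannianHeatKernel (t x : ℝ) : ℝ :=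
  ∑' m : ℕ, (m + 1) * exp (-(m * (m + 2)) * t) * (Polynomial.Chebyshev.U ℝ m).eval x

lemma measurable_riemannianHeatKernel (t : ℝ) : Measurable (riemannianHeatKernel t) :=
  Measurable.tsum fun _ => measurable_const.mul (Polynomial.continuous _).measurable

/-- The terms of the series of `heatP` at `z = 0`, indexed by the weight vectors `x ^ i * y ^ j`
of the representations of `SU(2)`: the summation index `n` of `heatP` is `i - j` and `k` is
`min i j`. Here `c` stands for `cos r`. -/
noncomputable def heatCoeff (t c : ℝ) (p : ℕ × ℕ) : ℝ :=
  (p.1 + p.2 + 1) * exp (-(4 * p.1 * p.2 + 2 * (p.1 + p.2)) * t) *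
    symPowDiag c c (c ^ 2 - 1) p.1 p.2

lemma heatCoeff_swap (t c : ℝ) (p : ℕ × ℕ) : heatCoeff t c p.swap = heatCoeff t c p := by
  simp only [heatCoeff, Prod.fst_swap, Prod.snd_swap, symPowDiag_comm c c _ p.2 p.1]
  ring_nf

lemma mul_sub_mul_sq_le {a : ℝ} (ha : 0 < a) (b x : ℝ) : b * x - a * x ^ 2 ≤ b ^ 2 / (4 * a) := by
  rw [le_div_iff₀ (by positivity)]
  nlinarith [sq_nonneg (2 * a * x - b)]

/-- The factor depending on `i` of a summable majorant of `heatCoeff t c (i, j)`. -/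
noncomputable def heatMajorant (t : ℝ) (i : ℕ) : ℝ := (i + 1) * exp (-(2 * t) * i)

lemma heatMajorant_nonneg (t : ℝ) (i : ℕ) : 0 ≤ heatMajorant t i := by
  unfold heatMajorant; positivity

lemma summable_heatMajorant {t : ℝ} (ht : 0 < t) : Summable (heatMajorant t) := by
  have h₁ := Real.summable_pow_mul_exp_neg_nat_mul 1 (mul_pos two_pos ht)
  have h₀ := Real.summable_pow_mul_exp_neg_nat_mul 0 (mul_pos two_pos ht)
  refine (h₁.add h₀).congr fun i => ?_
  rw [heatMajorant, pow_one, pow_zero, add_mul]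

lemma abs_heatCoeff_le_of_le {t c : ℝ} (ht : 0 < t) (hc₀ : 0 ≤ c) (hc₁ : c ≤ 1) {i j : ℕ}
    (hij : i ≤ j) :
    |heatCoeff t c (i, j)| ≤
      exp (log 3 ^ 2 / (4 * (4 * t))) * (heatMajorant t i * heatMajorant t j) := by
  have hij' : (i : ℝ) ≤ j := mod_cast hij
  have hpoly : (i + j + 1 : ℝ) ≤ (i + 1) * (j + 1) := by
    nlinarith [mul_nonneg (Nat.cast_nonneg (α := ℝ) i) (Nat.cast_nonneg (α := ℝ) j)]
  have hexponent : -(4 * i * j + 2 * (i + j)) * t + log 3 * i ≤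
      log 3 ^ 2 / (4 * (4 * t)) + (-(2 * t) * i + -(2 * t) * j) := by
    have hsq : 4 * t * (i : ℝ) ^ 2 ≤ 4 * t * (i * j) := by
      rw [sq]; gcongr
    linarith [mul_sub_mul_sq_le (mul_pos four_pos ht) (log 3) i]
  calc |heatCoeff t c (i, j)|
      = (i + j + 1) * exp (-(4 * i * j + 2 * (i + j)) * t) *
          |symPowDiag c c (c ^ 2 - 1) i j| := by
        rw [heatCoeff, abs_mul, abs_of_nonneg (by positivity)]
    _ ≤ (i + j + 1) * exp (-(4 * i * j + 2 * (i + j)) * t) * 3 ^ i := by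
        gcongr; exact abs_symPowDiag_le_three_pow hc₀ hc₁ i j
    _ = (i + j + 1) * exp (-(4 * i * j + 2 * (i + j)) * t + log 3 * i) := by
        rw [exp_add, exp_mul (log 3), exp_log three_pos, rpow_natCast, mul_assoc]
    _ ≤ (i + 1) * (j + 1) *
          exp (log 3 ^ 2 / (4 * (4 * t)) + (-(2 * t) * i + -(2 * t) * j)) := by gcongr
    _ = exp (log 3 ^ 2 / (4 * (4 * t))) * (heatMajorant t i * heatMajorant t j) := by
        rw [heatMajorant, heatMajorant, exp_add, exp_add]; ring

lemma summable_heatCoeff {t c : ℝ} (ht : 0 < t) (hc₀ : 0 ≤ c) (hc₁ : c ≤ 1) :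
    Summable (heatCoeff t c) := by
  have hprod : Summable fun p : ℕ × ℕ => heatMajorant t p.1 * heatMajorant t p.2 :=
    (summable_heatMajorant ht).mul_of_nonneg (summable_heatMajorant ht) (heatMajorant_nonneg t)
      (heatMajorant_nonneg t)
  refine .of_norm_bounded (hprod.mul_left (exp (log 3 ^ 2 / (4 * (4 * t))))) fun ⟨i, j⟩ => ?_
  rcases le_total i j with hij | hji
  · exact abs_heatCoeff_le_of_le ht hc₀ hc₁ hij
  · rw [← heatCoeff_swap, mul_comm (heatMajorant _ _)]
    exact abs_heatCoeff_le_of_le ht hc₀ hc₁ hji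

/-- The bijection `(n, k) ↦ (k + n⁺, k + n⁻)` from the indices of `heatP` to those of
`heatCoeff`. -/
def weightIndexEquiv : ℤ × ℕ ≃ ℕ × ℕ where
  toFun p := (p.2 + p.1.toNat, p.2 + (-p.1).toNat)
  invFun q := (q.1 - q.2, min q.1 q.2)
  left_inv := fun ⟨n, k⟩ => by ext <;> simp only <;> omega
  right_inv := fun ⟨i, j⟩ => by ext <;> simp only <;> omega

lemma heatTerm_zero_eq_heatCoeff {r : ℝ} (hr : cos r ≠ 0) (t : ℝ) (n : ℤ) (k : ℕ) :
    heatTerm t r 0 n k = heatCoeff t (cos r) (weightIndexEquiv (n, k)) := by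
  have hcoeff : heatCoeff t (cos r) (weightIndexEquiv (n, k)) =
      heatCoeff t (cos r) (k, k + n.natAbs) := by
    rcases le_total 0 n with hn | hn
    · rw [← heatCoeff_swap]
      congr 1
      ext <;> simp only [weightIndexEquiv, Equiv.coe_fn_mk, Prod.swap_prod_mk] <;> omega
    · congr 1
      ext <;> simp only [weightIndexEquiv, Equiv.coe_fn_mk] <;> omega
  rw [hcoeff, heatTerm, heatCoeff, ← pow_mul_jacobiP_eq_symPowDiag hr, ← cos_two_mul,
    Complex.ofReal_zero, mul_zero, zero_mul, Complex.exp_zero, mul_one]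
  push_cast
  ring_nf

lemma heatP_zero_eq_tsum {t r : ℝ} (ht : 0 < t) (hr : 0 < cos r) :
    heatP t r 0 = ∑' p, heatCoeff t (cos r) p := by
  have hsum := weightIndexEquiv.summable_iff.2 (summable_heatCoeff ht hr.le (cos_le_one r))
  simp only [heatP, heatTerm_zero_eq_heatCoeff hr.ne', ← Complex.ofReal_tsum, Complex.ofReal_re]
  rw [← weightIndexEquiv.tsum_eq]
  exact hsum.tsum_prod.symm

lemma hasSum_sum_antidiagonal {A M : Type*} [AddMonoid A] [Finset.HasAntidiagonal A]
    [AddCommMonoid M] [TopologicalSpace M] [ContinuousAdd M] [RegularSpace M]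
    {f : A × A → M} {a : M} (hf : HasSum f a) :
    HasSum (fun m => ∑ p ∈ antidiagonal m, f p) a :=
  (Finset.HasAntidiagonal.sigmaAntidiagonalEquivProd.hasSum_iff.2 hf).sigma fun m =>
    (antidiagonal m).hasSum f

lemma heatCoeff_mul_gaussian_eq {t : ℝ} (ht : 0 < t) (c y : ℝ) (i j : ℕ) :
    heatCoeff t c (i, j) * exp (-(1 / (4 * t)) * (y - 2 * ((i : ℝ) - j) * t) ^ 2) =
      exp (-(1 / (4 * t)) * y ^ 2) * ((i + j + 1) * exp (-((i + j) * (i + j + 2)) * t) *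
        symPowDiag (exp y * c) ((exp y)⁻¹ * c) (c ^ 2 - 1) i j) := by
  have hzpow : exp y ^ ((i : ℤ) - j) = exp (((i : ℝ) - j) * y) := by
    rw [← rpow_intCast, ← exp_mul, mul_comm, Int.cast_sub, Int.cast_natCast, Int.cast_natCast]
  have hexp : exp (-(4 * i * j + 2 * (i + j)) * t) *
        exp (-(1 / (4 * t)) * (y - 2 * ((i : ℝ) - j) * t) ^ 2) =
      exp (-(1 / (4 * t)) * y ^ 2) * exp (-((i + j) * (i + j + 2)) * t) *
        exp (((i : ℝ) - j) * y) := by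
    simp only [← exp_add]
    congr 1
    field_simp
    ring
  rw [symPowDiag_mul_inv_mul (exp_ne_zero y), hzpow, heatCoeff]
  linear_combination (i + j + 1 : ℝ) * symPowDiag c c (c ^ 2 - 1) i j * hexp

theorem hasSum_heatCoeff_mul_gaussian {t c : ℝ} (ht : 0 < t) (hc₀ : 0 ≤ c) (hc₁ : c ≤ 1) (y : ℝ) :
    HasSum (fun p : ℕ × ℕ => heatCoeff t c p *
        exp (-(1 / (4 * t)) * (y - 2 * ((p.1 : ℝ) - p.2) * t) ^ 2))
      (exp (-(1 / (4 * t)) * y ^ 2) * riemannianHeatKernel t (c * cosh y)) := by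
  set f : ℕ × ℕ → ℝ := fun p => heatCoeff t c p *
    exp (-(1 / (4 * t)) * (y - 2 * ((p.1 : ℝ) - p.2) * t) ^ 2)
  have hsum : Summable f := by
    refine .of_norm_bounded (summable_heatCoeff ht hc₀ hc₁).norm fun p => ?_
    rw [norm_mul, norm_of_nonneg (exp_nonneg _)]
    refine mul_le_of_le_one_right (norm_nonneg _) (exp_le_one_iff.2 ?_)
    rw [neg_mul, neg_nonpos]
    positivity
  have htrace : exp y * c + (exp y)⁻¹ * c = 2 * (c * cosh y) := by
    rw [cosh_eq, exp_neg]; ring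
  have hdet : exp y * c * ((exp y)⁻¹ * c) - (c ^ 2 - 1) = 1 := by
    field_simp [exp_ne_zero y]; ring
  have hlevel (m : ℕ) : ∑ p ∈ antidiagonal m, f p = exp (-(1 / (4 * t)) * y ^ 2) *
      ((m + 1) * exp (-(m * (m + 2)) * t) *
        (Polynomial.Chebyshev.U ℝ m).eval (c * cosh y)) := by
    rw [← sum_antidiagonal_symPowDiag_eq_eval_U htrace hdet, Finset.mul_sum, Finset.mul_sum]
    refine Finset.sum_congr rfl fun ⟨i, j⟩ hp => ?_
    have hm : (m : ℝ) = i + j := by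
      exact_mod_cast (Finset.HasAntidiagonal.mem_antidiagonal.1 hp).symm
    rw [hm]
    exact heatCoeff_mul_gaussian_eq ht c y i j
  have hregroup := hasSum_sum_antidiagonal hsum.hasSum
  simp only [hlevel] at hregroup
  rw [riemannianHeatKernel, ← tsum_mul_left, hregroup.tsum_eq]
  exact hsum.hasSum

theorem integral_gaussian_mul_riemannianHeatKernel {t r : ℝ} (ht : 0 < t) (hr : 0 < cos r) :
    ∫ y, exp (-(1 / (4 * t)) * y ^ 2) * riemannianHeatKernel t (cos r * cosh y) =
      √(4 * π * t) * heatP t r 0 := by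
  have hintegrable (b : ℝ) : Integrable fun y => exp (-(1 / (4 * t)) * (y - b) ^ 2) :=
    (integrable_exp_neg_mul_sq (by positivity)).comp_sub_right b
  have hintegral (b : ℝ) : ∫ y, exp (-(1 / (4 * t)) * (y - b) ^ 2) = √(4 * π * t) := by
    rw [integral_sub_right_eq_self (fun y => exp (-(1 / (4 * t)) * y ^ 2)), integral_gaussian]
    congr 1
    field_simp
  have hcoeff := summable_heatCoeff ht hr.le (cos_le_one r)
  have hswap := hasSum_integral_of_summable_integral_norm
    (F := fun (p : ℕ × ℕ) y => heatCoeff t (cos r) p *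
      exp (-(1 / (4 * t)) * (y - 2 * ((p.1 : ℝ) - p.2) * t) ^ 2))
    (fun p => (hintegrable _).const_mul _)
    (by
      simp only [norm_mul, norm_of_nonneg (exp_nonneg _), integral_const_mul, hintegral]
      exact hcoeff.norm.mul_right _)
  simp only [integral_const_mul, hintegral,
    (hasSum_heatCoeff_mul_gaussian ht hr.le (cos_le_one r) _).tsum_eq] at hswap
  rw [hswap.unique (hcoeff.hasSum.mul_right _), heatP_zero_eq_tsum ht hr, mul_comm]

end SpectralSum

section MethodOfImages

/-- The contribution of the `n`-th image `δ - 2 * π * n` of the point `δ` to the heat kernel on the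
circle, with the Gaussian factor `exp (-δ ^ 2 / (4 * t))` of the point itself divided out. -/
noncomputable def imageTerm (t : ℝ) (δ : ℂ) (n : ℤ) : ℂ :=
  (δ - 2 * π * n) * Complex.exp ((π * n * δ - π ^ 2 * n ^ 2) / t)

/-- The sum over all images. Its main term is the one at `n = 0`, which is `δ`. -/
noncomputable def imageSum (t : ℝ) (δ : ℂ) : ℂ := ∑' n : ℤ, imageTerm t δ n

lemma imageTerm_eq_jacobiTheta₂_term {t : ℝ} (ht : t ≠ 0) (δ : ℂ) (n : ℤ) :
    imageTerm t δ n = Complex.I *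
      (jacobiTheta₂'_term n (-Complex.I * δ / (2 * t)) (π / t * Complex.I) -
        Complex.I * δ * jacobiTheta₂_term n (-Complex.I * δ / (2 * t)) (π / t * Complex.I)) := by
  have htc : (t : ℂ) ≠ 0 := mod_cast ht
  have hexponent : 2 * π * Complex.I * n * (-Complex.I * δ / (2 * t)) +
      π * Complex.I * n ^ 2 * (π / t * Complex.I) = (π * n * δ - π ^ 2 * n ^ 2) / t := by
    field_simp
    linear_combination (n ^ 2 * π - n * δ) * Complex.I_sq
  rw [imageTerm, jacobiTheta₂'_term, jacobiTheta₂_term, hexponent]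
  linear_combination (δ - 2 * π * n) * Complex.exp ((π * n * δ - π ^ 2 * n ^ 2) / t) *
    Complex.I_sq

lemma hasSum_imageTerm {t : ℝ} (ht : 0 < t) (δ : ℂ) :
    HasSum (imageTerm t δ) (Complex.I *
      (jacobiTheta₂' (-Complex.I * δ / (2 * t)) (π / t * Complex.I) -
        Complex.I * δ * jacobiTheta₂ (-Complex.I * δ / (2 * t)) (π / t * Complex.I))) := by
  have him : 0 < (π / t * Complex.I : ℂ).im := by
    rw [← Complex.ofReal_div, Complex.im_ofReal_mul, Complex.I_im, mul_one]
    positivity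
  simp only [funext (imageTerm_eq_jacobiTheta₂_term ht.ne' δ)]
  exact ((hasSum_jacobiTheta₂'_term _ him).sub
    ((hasSum_jacobiTheta₂_term _ him).mul_left _)).mul_left _

lemma jacobiTheta₂'_eq_imageSum {t : ℝ} (ht : 0 < t) (δ : ℂ) :
    jacobiTheta₂' (δ / (2 * π)) (t / π * Complex.I) =
      -(4 * π) * ((√(π / t) / (4 * t) : ℝ) * Complex.exp (-δ ^ 2 / (4 * t)) * imageSum t δ) := by
  have hπ : (π : ℂ) ≠ 0 := mod_cast pi_ne_zero
  have htc : (t : ℂ) ≠ 0 := mod_cast ht.ne'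
  have hI := Complex.I_ne_zero
  have hshift : δ / (2 * π) / (t / π * Complex.I) = -Complex.I * δ / (2 * t) := by
    field_simp; simp
  have hinv : -1 / (t / π * Complex.I) = π / t * Complex.I := by
    field_simp; simp
  have hgauss : -π * Complex.I * (δ / (2 * π)) ^ 2 / (t / π * Complex.I) = -δ ^ 2 / (4 * t) := by
    field_simp; norm_num
  have hroot : (-Complex.I * (t / π * Complex.I)) ^ (1 / 2 : ℂ) = ((√(π / t))⁻¹ : ℝ) := by
    have hreal : -Complex.I * (t / π * Complex.I) = ((t / π : ℝ) : ℂ) := by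
      push_cast
      linear_combination -(t / π : ℂ) * Complex.I_sq
    rw [hreal, ← sqrt_inv, inv_div, sqrt_eq_rpow, Complex.ofReal_cpow (by positivity)]
    norm_num
  have hlinear : 2 * π * Complex.I * (δ / (2 * π)) = Complex.I * δ := by field_simp
  rw [jacobiTheta₂'_functional_equation, hshift, hinv, hgauss, hroot, hlinear, imageSum,
    (hasSum_imageTerm ht δ).tsum_eq]
  push_cast
  field_simp
  rw [Complex.I_sq]
  ring

lemma hasSum_sine_series {t : ℝ} (ht : 0 < t) (δ : ℂ) :
    HasSum (fun m : ℕ => ((m + 1) * Real.exp (-(m + 1) ^ 2 * t) : ℝ) * Complex.sin ((m + 1) * δ))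
      ((√(π / t) / (4 * t) : ℝ) * Complex.exp (-δ ^ 2 / (4 * t)) * imageSum t δ) := by
  have hπ : (π : ℂ) ≠ 0 := mod_cast pi_ne_zero
  have him : 0 < (t / π * Complex.I : ℂ).im := by
    rw [← Complex.ofReal_div, Complex.im_ofReal_mul, Complex.I_im, mul_one]
    positivity
  have hpair (n : ℕ) : jacobiTheta₂'_term n (δ / (2 * π)) (t / π * Complex.I) +
      jacobiTheta₂'_term (-n) (δ / (2 * π)) (t / π * Complex.I) =
      -(4 * π) * ((n * Real.exp (-n ^ 2 * t) : ℝ) * Complex.sin (n * δ)) := by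
    have hexp (k : ℤ) : 2 * π * Complex.I * k * (δ / (2 * π)) +
        π * Complex.I * k ^ 2 * (t / π * Complex.I) = (-k ^ 2 * t : ℝ) + k * δ * Complex.I := by
      push_cast
      field_simp
      linear_combination (k ^ 2 * t) * Complex.I_sq
    rw [jacobiTheta₂'_term, jacobiTheta₂'_term, jacobiTheta₂_term, jacobiTheta₂_term, hexp, hexp,
      Complex.exp_add, Complex.exp_add, Complex.sin]
    push_cast
    ring_nf
  have hsum := (hasSum_jacobiTheta₂'_term (δ / (2 * π)) him).nat_add_neg
  have hzero : jacobiTheta₂'_term 0 (δ / (2 * π)) (t / π * Complex.I) = 0 := by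
    simp [jacobiTheta₂'_term]
  simp only [hpair, jacobiTheta₂'_eq_imageSum ht, hzero, add_zero] at hsum
  have hscaled := (hasSum_mul_left_iff (by simp : -(4 * (π : ℂ)) ≠ 0)).1 hsum
  simpa using (hasSum_nat_add_iff' 1).2 hscaled

theorem riemannianHeatKernel_mul_sin {t x : ℝ} (ht : 0 < t) {δ : ℂ} (hδ : Complex.cos δ = x) :
    riemannianHeatKernel t x * Complex.sin δ = (Real.exp t * (√(π / t) / (4 * t)) : ℝ) *
      Complex.exp (-δ ^ 2 / (4 * t)) * imageSum t δ := by
  have hterm (m : ℕ) : (((m + 1) * Real.exp (-(m * (m + 2)) * t) *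
      (Polynomial.Chebyshev.U ℝ m).eval x : ℝ) : ℂ) * Complex.sin δ = Real.exp t *
        (((m + 1) * Real.exp (-(m + 1) ^ 2 * t) : ℝ) * Complex.sin ((m + 1) * δ)) := by
    have hexp : Real.exp (-(m * (m + 2)) * t) = Real.exp t * Real.exp (-(m + 1) ^ 2 * t) := by
      rw [← Real.exp_add]; ring_nf
    have hU := Polynomial.Chebyshev.U_complex_cos δ m
    rw [hδ, ← Polynomial.Chebyshev.complex_ofReal_eval_U] at hU
    rw [hexp]
    push_cast at hU ⊢
    linear_combination (m + 1) * Complex.exp t * Complex.exp (-(m + 1) ^ 2 * t) * hU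
  rw [riemannianHeatKernel, Complex.ofReal_tsum, ← tsum_mul_right, tsum_congr hterm,
    tsum_mul_left, (hasSum_sine_series ht δ).tsum_eq]
  push_cast
  ring

lemma norm_cosh_le_exp_abs_re (z : ℂ) : ‖Complex.cosh z‖ ≤ Real.exp |z.re| := by
  have hexp (w : ℂ) : ‖Complex.exp w‖ ≤ Real.exp |w.re| :=
    (Complex.norm_exp w).trans_le (exp_le_exp.2 (le_abs_self _))
  have hneg := hexp (-z)
  rw [Complex.neg_re, abs_neg] at hneg
  rw [Complex.cosh, norm_div, Complex.norm_ofNat, div_le_iff₀ two_pos]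
  linarith [norm_add_le (Complex.exp z) (Complex.exp (-z)), hexp z]

lemma norm_sinh_le_norm_mul_exp_abs_re (z : ℂ) :
    ‖Complex.sinh z‖ ≤ ‖z‖ * Real.exp |z.re| := by
  have hderiv (s : ℝ) :
      HasDerivAt (fun s : ℝ => Complex.sinh (s * z)) (Complex.cosh (s * z) * z) s := by
    have hline : HasDerivAt (fun s : ℝ => (s : ℂ) * z) z s := by
      simpa using (Complex.ofRealCLM.hasDerivAt (x := s)).mul_const z
    exact (Complex.hasDerivAt_sinh _).comp s hline
  have hbound : ∀ s ∈ Set.Ico (0 : ℝ) 1,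
      ‖Complex.cosh (s * z) * z‖ ≤ ‖z‖ * Real.exp |z.re| := by
    intro s hs
    have hre : |((s : ℂ) * z).re| ≤ |z.re| := by
      rw [Complex.re_ofReal_mul, abs_mul, abs_of_nonneg hs.1]
      exact mul_le_of_le_one_left (abs_nonneg _) hs.2.le
    rw [norm_mul, mul_comm]
    gcongr
    exact (norm_cosh_le_exp_abs_re _).trans (exp_le_exp.2 hre)
  simpa using norm_image_sub_le_of_norm_deriv_le_segment_01'
    (fun s _ => (hderiv s).hasDerivWithinAt) hbound

lemma imageTerm_add_imageTerm_neg (t : ℝ) (δ : ℂ) (n : ℕ) :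
    imageTerm t δ n + imageTerm t δ (-n) = 2 * Real.exp (-(π ^ 2 * n ^ 2 / t)) *
      (δ * Complex.cosh (π * n / t * δ) - 2 * π * n * Complex.sinh (π * n / t * δ)) := by
  have hplus : Complex.exp ((π * n * δ - π ^ 2 * n ^ 2) / t) =
      Real.exp (-(π ^ 2 * n ^ 2 / t)) * Complex.exp (π * n / t * δ) := by
    push_cast
    rw [← Complex.exp_add]
    ring_nf
  have hminus : Complex.exp ((π * (-n) * δ - π ^ 2 * (-n) ^ 2) / t) =
      Real.exp (-(π ^ 2 * n ^ 2 / t)) * Complex.exp (-(π * n / t * δ)) := by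
    push_cast
    rw [← Complex.exp_add]
    ring_nf
  rw [imageTerm, imageTerm, Int.cast_neg, Int.cast_natCast, hplus, hminus, Complex.cosh,
    Complex.sinh]
  ring

lemma norm_imageTerm_add_imageTerm_neg_le_mul_exp {t : ℝ} (ht : 0 < t) {δ : ℂ}
    (hδ : |δ.re| ≤ π / 2) (n : ℕ) :
    ‖imageTerm t δ n + imageTerm t δ (-n)‖ ≤ 2 * ‖δ‖ *
      ((1 + 4 * (π ^ 2 * n ^ 2 / (2 * t))) * Real.exp (-(π ^ 2 * n ^ 2 / (2 * t)))) := by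
  set v : ℝ := π ^ 2 * n ^ 2 / (2 * t) with hv
  set z : ℂ := π * n / t * δ with hz
  have hz' : z = (π * n / t : ℝ) * δ := by rw [hz]; push_cast; rfl
  have hn : (n : ℝ) ≤ n ^ 2 := mod_cast Nat.le_self_pow two_ne_zero n
  have hexponent : π ^ 2 * n ^ 2 / t = 2 * v := by rw [hv]; field_simp
  have hre : |z.re| ≤ v := by
    rw [hz', Complex.re_ofReal_mul, abs_mul, abs_of_nonneg (by positivity)]
    calc π * n / t * |δ.re| ≤ π * n ^ 2 / t * (π / 2) := by gcongr
      _ = v := by rw [hv]; ring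
  have hnorm : 2 * π * n * ‖z‖ = 4 * v * ‖δ‖ := by
    rw [hz', norm_mul, Complex.norm_real, norm_of_nonneg (by positivity), hv]; ring
  have hcosh : ‖Complex.cosh z‖ ≤ Real.exp v :=
    (norm_cosh_le_exp_abs_re z).trans (exp_le_exp.2 hre)
  have hsinh : ‖Complex.sinh z‖ ≤ ‖z‖ * Real.exp v :=
    (norm_sinh_le_norm_mul_exp_abs_re z).trans (by gcongr)
  calc ‖imageTerm t δ n + imageTerm t δ (-n)‖
      = 2 * Real.exp (-(2 * v)) * ‖δ * Complex.cosh z - 2 * π * n * Complex.sinh z‖ := by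
        rw [imageTerm_add_imageTerm_neg, norm_mul, norm_mul, Complex.norm_ofNat,
          Complex.norm_real, norm_of_nonneg (exp_nonneg _), hexponent]
    _ ≤ 2 * Real.exp (-(2 * v)) * (‖δ‖ * Real.exp v + 2 * π * n * (‖z‖ * Real.exp v)) := by
        gcongr
        refine (norm_sub_le _ _).trans ?_
        simp only [norm_mul, Complex.norm_ofNat, Complex.norm_natCast, Complex.norm_real,
          norm_of_nonneg pi_nonneg]
        gcongr
    _ = 2 * ‖δ‖ * ((1 + 4 * v) * Real.exp (-v)) := by
        have hexp : Real.exp (-(2 * v)) * Real.exp v = Real.exp (-v) := by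
          rw [← Real.exp_add]; ring_nf
        linear_combination 2 * ‖δ‖ * (1 + 4 * v) * hexp +
          2 * Real.exp (-(2 * v)) * Real.exp v * hnorm

lemma one_add_four_mul_mul_exp_neg_le (v : ℝ) :
    (1 + 4 * v) * Real.exp (-v) ≤ 8 * Real.exp (-(v / 2)) := by
  have hpoly : 1 + 4 * v ≤ 8 * Real.exp (v / 2) := by linarith [add_one_le_exp (v / 2)]
  calc (1 + 4 * v) * Real.exp (-v) ≤ 8 * Real.exp (v / 2) * Real.exp (-v) := by gcongr
    _ = 8 * Real.exp (-(v / 2)) := by rw [mul_assoc, ← Real.exp_add]; ring_nf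

lemma norm_imageTerm_add_imageTerm_neg_le {t : ℝ} (ht : 0 < t) {δ : ℂ} (hδ : |δ.re| ≤ π / 2)
    (n : ℕ) :
    ‖imageTerm t δ n + imageTerm t δ (-n)‖ ≤ 16 * ‖δ‖ * Real.exp (-(π ^ 2 / (4 * t))) ^ n := by
  have hn : (n : ℝ) ≤ n ^ 2 := mod_cast Nat.le_self_pow two_ne_zero n
  have hratio : Real.exp (-(π ^ 2 * n ^ 2 / (2 * t) / 2)) ≤
      Real.exp (-(π ^ 2 / (4 * t))) ^ n := by
    rw [← exp_nat_mul, exp_le_exp]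
    calc -(π ^ 2 * n ^ 2 / (2 * t) / 2) = -(n ^ 2 * (π ^ 2 / (4 * t))) := by ring
      _ ≤ -(n * (π ^ 2 / (4 * t))) := by gcongr
      _ = n * -(π ^ 2 / (4 * t)) := by ring
  calc ‖imageTerm t δ n + imageTerm t δ (-n)‖
      ≤ 2 * ‖δ‖ * (8 * Real.exp (-(π ^ 2 * n ^ 2 / (2 * t) / 2))) :=
        (norm_imageTerm_add_imageTerm_neg_le_mul_exp ht hδ n).trans <|
          mul_le_mul_of_nonneg_left (one_add_four_mul_mul_exp_neg_le _) (by positivity)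
    _ ≤ 2 * ‖δ‖ * (8 * Real.exp (-(π ^ 2 / (4 * t))) ^ n) := by gcongr
    _ = 16 * ‖δ‖ * Real.exp (-(π ^ 2 / (4 * t))) ^ n := by ring

/-- A bound for the relative error of `imageSum t δ ≈ δ` on the strip `|δ.re| ≤ π / 2`. -/
noncomputable def imageError (t : ℝ) : ℝ :=
  16 * (Real.exp (-(π ^ 2 / (4 * t))) / (1 - Real.exp (-(π ^ 2 / (4 * t)))))

lemma exp_neg_pi_sq_div_lt_one {t : ℝ} (ht : 0 < t) : Real.exp (-(π ^ 2 / (4 * t))) < 1 := by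
  rw [exp_lt_one_iff, neg_lt_zero]; positivity

lemma imageError_nonneg {t : ℝ} (ht : 0 < t) : 0 ≤ imageError t := by
  have hlt := exp_neg_pi_sq_div_lt_one ht
  exact mul_nonneg (by norm_num) (div_nonneg (exp_nonneg _) (sub_nonneg.2 hlt.le))

lemma tendsto_imageError : Tendsto imageError (𝓝[>] 0) (𝓝 0) := by
  have hratio : Tendsto (fun t : ℝ => Real.exp (-(π ^ 2 / (4 * t)))) (𝓝[>] 0) (𝓝 0) := by
    refine tendsto_exp_neg_atTop_nhds_zero.comp ?_
    refine (tendsto_inv_nhdsGT_zero.const_mul_atTop (by positivity : 0 < π ^ 2 / 4)).congr ?_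
    intro t
    rw [← div_eq_mul_inv, div_div]
  simpa [imageError] using! (hratio.div (hratio.const_sub 1) (by norm_num)).const_mul 16

theorem norm_imageSum_sub_le {t : ℝ} (ht : 0 < t) {δ : ℂ} (hδ : |δ.re| ≤ π / 2) :
    ‖imageSum t δ - δ‖ ≤ ‖δ‖ * imageError t := by
  have hlt := exp_neg_pi_sq_div_lt_one ht
  have hzero : imageTerm t δ 0 = δ := by simp [imageTerm]
  have hpairs : HasSum (fun n : ℕ => imageTerm t δ (n + 1 : ℕ) + imageTerm t δ (-(n + 1 : ℕ)))
      (imageSum t δ - δ) := by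
    have hsum := (hasSum_imageTerm ht δ).summable.hasSum.nat_add_neg
    simpa [hzero, imageSum] using (hasSum_nat_add_iff' 1).2 hsum
  have hgeom : HasSum (fun n : ℕ => 16 * ‖δ‖ * Real.exp (-(π ^ 2 / (4 * t))) ^ (n + 1))
      (‖δ‖ * imageError t) := by
    have hfactor : (fun n : ℕ => 16 * ‖δ‖ * Real.exp (-(π ^ 2 / (4 * t))) ^ (n + 1)) =
        fun n => 16 * ‖δ‖ * Real.exp (-(π ^ 2 / (4 * t))) *
          Real.exp (-(π ^ 2 / (4 * t))) ^ n := by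
      ext n; ring
    have hvalue : ‖δ‖ * imageError t = 16 * ‖δ‖ * Real.exp (-(π ^ 2 / (4 * t))) *
        (1 - Real.exp (-(π ^ 2 / (4 * t))))⁻¹ := by
      rw [imageError]; ring
    rw [hfactor, hvalue]
    exact (hasSum_geometric_of_lt_one (exp_nonneg _) hlt).mul_left _
  rw [← hpairs.tsum_eq]
  exact tsum_of_norm_bounded hgeom fun n => norm_imageTerm_add_imageTerm_neg_le ht hδ (n + 1)

end MethodOfImages

section Phase

/-- The arccosine on `[-1, ∞)`, continued past `1` along the positive imaginary axis. -/
noncomputable def complexArccos (x : ℝ) : ℂ :=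
  if x ≤ 1 then arccos x else arcosh x * Complex.I

lemma complexArccos_of_le_one {x : ℝ} (hx : x ≤ 1) : complexArccos x = arccos x := if_pos hx

lemma complexArccos_of_one_lt {x : ℝ} (hx : 1 < x) : complexArccos x = arcosh x * Complex.I :=
  if_neg hx.not_ge

lemma cos_complexArccos {x : ℝ} (hx : -1 ≤ x) : Complex.cos (complexArccos x) = x := by
  rcases le_or_gt x 1 with hle | hlt
  · rw [complexArccos_of_le_one hle, ← Complex.ofReal_cos, cos_arccos hx hle]
  · rw [complexArccos_of_one_lt hlt, Complex.cos_mul_I, ← Complex.ofReal_cosh,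
      cosh_arcosh hlt.le]

lemma sin_complexArccos_ne_zero {x : ℝ} (hx : -1 < x) (hx₁ : x ≠ 1) :
    Complex.sin (complexArccos x) ≠ 0 := by
  intro hsin
  have hpyth := Complex.sin_sq_add_cos_sq (complexArccos x)
  rw [hsin, cos_complexArccos hx.le] at hpyth
  have hsq : x ^ 2 = 1 := by
    have : (x : ℂ) ^ 2 = 1 := by simpa using hpyth
    exact_mod_cast this
  rcases sq_eq_one_iff.1 hsq with hone | hneg
  exacts [hx₁ hone, hx.ne' hneg]

lemma abs_re_complexArccos_le {x : ℝ} (hx : 0 ≤ x) : |(complexArccos x).re| ≤ π / 2 := by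
  rcases le_or_gt x 1 with hle | hlt
  · rw [complexArccos_of_le_one hle, Complex.ofReal_re, abs_of_nonneg (arccos_nonneg x)]
    exact arccos_le_pi_div_two.2 hx
  · rw [complexArccos_of_one_lt hlt, Complex.re_ofReal_mul, Complex.I_re, mul_zero, abs_zero]
    positivity

lemma norm_complexArccos_le {x : ℝ} (hx : 0 ≤ x) :
    ‖complexArccos x‖ ≤ π / 2 * ‖Complex.sin (complexArccos x)‖ := by
  rcases le_or_gt x 1 with hle | hlt
  · have hjordan := mul_le_sin (arccos_nonneg x) (arccos_le_pi_div_two.2 hx)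
    have hsin := sin_nonneg_of_nonneg_of_le_pi (arccos_nonneg x) (arccos_le_pi x)
    rw [complexArccos_of_le_one hle, ← Complex.ofReal_sin, Complex.norm_real, Complex.norm_real,
      norm_of_nonneg (arccos_nonneg x), norm_of_nonneg (by positivity)]
    calc arccos x = π / 2 * (2 / π * arccos x) := by field_simp
      _ ≤ π / 2 * sin (arccos x) := by gcongr
  · have hpos := arcosh_pos hlt
    have hsinh := self_le_sinh_iff.2 hpos.le
    rw [complexArccos_of_one_lt hlt, Complex.sin_mul_I, ← Complex.ofReal_sinh, norm_mul, norm_mul,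
      Complex.norm_I, mul_one, mul_one, Complex.norm_real, Complex.norm_real,
      norm_of_nonneg hpos.le, norm_of_nonneg (hpos.le.trans hsinh)]
    nlinarith [pi_gt_three]

lemma ofReal_re_complexArccos_sq (x : ℝ) :
    (((complexArccos x ^ 2).re : ℝ) : ℂ) = complexArccos x ^ 2 := by
  rcases le_or_gt x 1 with hle | hlt
  · rw [complexArccos_of_le_one hle, ← Complex.ofReal_pow, Complex.ofReal_re]
  · rw [complexArccos_of_one_lt hlt, mul_pow, Complex.I_sq, mul_neg_one, ← Complex.ofReal_pow,
      ← Complex.ofReal_neg, Complex.ofReal_re]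

/-- The function `y ^ 2 + δ ^ 2 - r ^ 2`, where `cos δ = cos r * cosh y`, in the exponent of the
normalised Laplace integral. -/
noncomputable def phase (r y : ℝ) : ℝ :=
  y ^ 2 - r ^ 2 + (complexArccos (cos r * cosh y) ^ 2).re

lemma phase_of_le_one {r y : ℝ} (h : cos r * cosh y ≤ 1) :
    phase r y = y ^ 2 - r ^ 2 + arccos (cos r * cosh y) ^ 2 := by
  rw [phase, complexArccos_of_le_one h, ← Complex.ofReal_pow, Complex.ofReal_re]

lemma phase_of_one_lt {r y : ℝ} (h : 1 < cos r * cosh y) :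
    phase r y = y ^ 2 - r ^ 2 - arcosh (cos r * cosh y) ^ 2 := by
  rw [phase, complexArccos_of_one_lt h, mul_pow, Complex.I_sq, mul_neg_one, ← Complex.ofReal_pow,
    ← Complex.ofReal_neg, Complex.ofReal_re, sub_eq_add_neg _ (arcosh _ ^ 2)]

/-- The excess of `-log cos` over its quadratic Taylor polynomial at `0`. -/
noncomputable def logCosDefect (v : ℝ) : ℝ := -log (cos v) - v ^ 2 / 2

lemma logCosDefect_zero : logCosDefect 0 = 0 := by simp [logCosDefect]

lemma hasDerivAt_logCosDefect {v : ℝ} (hv : cos v ≠ 0) :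
    HasDerivAt logCosDefect (tan v - v) v := by
  have h := ((hasDerivAt_cos v).log hv).neg.sub ((hasDerivAt_pow 2 v).div_const 2)
  refine h.congr_deriv ?_
  rw [tan_eq_sin_div_cos]
  simp [neg_div]

lemma cos_pos_of_mem_Ioo_zero_pi_div_two {r : ℝ} (hr : r ∈ Set.Ioo 0 (π / 2)) : 0 < cos r :=
  cos_pos_of_mem_Ioo ⟨by linarith [hr.1, pi_pos], hr.2⟩

lemma convexOn_logCosDefect : ConvexOn ℝ (Set.Ico 0 (π / 2)) logCosDefect := by
  have hcos : ∀ v ∈ Set.Ico 0 (π / 2), cos v ≠ 0 := fun v hv =>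
    (cos_pos_of_mem_Ioo ⟨by linarith [hv.1, pi_pos], hv.2⟩).ne'
  have hcos' : ∀ v ∈ interior (Set.Ico 0 (π / 2)), cos v ≠ 0 :=
    fun v hv => hcos v (interior_subset hv)
  refine convexOn_of_hasDerivWithinAt2_nonneg (convex_Ico _ _)
    (fun v hv => (hasDerivAt_logCosDefect (hcos v hv)).continuousAt.continuousWithinAt)
    (fun v hv => (hasDerivAt_logCosDefect (hcos' v hv)).hasDerivWithinAt)
    (fun v hv => ((hasDerivAt_tan (hcos' v hv)).sub (hasDerivAt_id v)).hasDerivWithinAt)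
    fun v hv => ?_
  have hpos : 0 < cos v ^ 2 := by have := hcos' v hv; positivity
  rw [sub_nonneg, le_div_iff₀ hpos, one_mul]
  exact cos_sq_le_one v

lemma logCosDefect_pos {r : ℝ} (hr : r ∈ Set.Ioo 0 (π / 2)) : 0 < logCosDefect r := by
  have hcos : ∀ v ∈ Set.Icc 0 r, cos v ≠ 0 := fun v hv =>
    (cos_pos_of_mem_Ioo ⟨by linarith [hv.1, pi_pos], by linarith [hv.2, hr.2]⟩).ne'
  have hmono : StrictMonoOn logCosDefect (Set.Icc 0 r) := by
    refine strictMonoOn_of_deriv_pos (convex_Icc 0 r)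
      (fun v hv => (hasDerivAt_logCosDefect (hcos v hv)).continuousAt.continuousWithinAt)
      fun v hv => ?_
    rw [(hasDerivAt_logCosDefect (hcos v (interior_subset hv))).deriv, sub_pos]
    rw [interior_Icc] at hv
    exact lt_tan hv.1 (hv.2.trans hr.2)
  simpa only [logCosDefect_zero] using
    hmono (Set.left_mem_Icc.2 hr.1.le) (Set.right_mem_Icc.2 hr.1.le) hr.1

lemma sub_mul_logCosDefect_div_le {r δ : ℝ} (hr : r ∈ Set.Ioo 0 (π / 2)) (hδ₀ : 0 ≤ δ)
    (hδr : δ ≤ r) : (r - δ) * (logCosDefect r / r) ≤ logCosDefect r - logCosDefect δ := by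
  have hconv := convexOn_logCosDefect.2 (Set.left_mem_Ico.2 pi_div_two_pos)
    (Set.Ioo_subset_Ico_self hr) (sub_nonneg.2 ((div_le_one hr.1).2 hδr))
    (div_nonneg hδ₀ hr.1.le) (sub_add_cancel _ _)
  simp only [smul_eq_mul, mul_zero, zero_add, logCosDefect_zero,
    div_mul_cancel₀ _ hr.1.ne'] at hconv
  have hsplit : (r - δ) * (logCosDefect r / r) = logCosDefect r - δ / r * logCosDefect r := by
    field_simp [hr.1.ne']
  linarith

lemma one_add_sq_div_two_le_cosh (y : ℝ) : 1 + y ^ 2 / 2 ≤ cosh y := by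
  have hhalf : cosh y = 1 + 2 * sinh (y / 2) ^ 2 := by
    have hdouble := cosh_two_mul (y / 2)
    rw [mul_div_cancel₀ y two_ne_zero, cosh_sq] at hdouble
    linarith
  have hsinh : (y / 2) ^ 2 ≤ sinh (y / 2) ^ 2 := by
    rw [sq_le_sq, abs_sinh]
    exact self_le_sinh_iff.2 (abs_nonneg _)
  linarith

lemma monotoneOn_mul_cosh_sub_sinh : MonotoneOn (fun y => y * cosh y - sinh y) (Set.Ici 0) := by
  have hderiv (y : ℝ) : HasDerivAt (fun y => y * cosh y - sinh y) (y * sinh y) y := by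
    refine (((hasDerivAt_id y).mul (hasDerivAt_cosh y)).sub (hasDerivAt_sinh y)).congr_deriv ?_
    simp
  refine monotoneOn_of_deriv_nonneg (convex_Ici 0)
    (fun y _ => (hderiv y).continuousAt.continuousWithinAt)
    (fun y _ => (hderiv y).differentiableAt.differentiableWithinAt) fun y hy => ?_
  rw [interior_Ici, Set.mem_Ioi] at hy
  rw [(hderiv y).deriv]
  exact mul_nonneg hy.le (sinh_nonneg_iff.2 hy.le)

lemma sinh_le_mul_cosh {y : ℝ} (hy : 0 ≤ y) : sinh y ≤ y * cosh y := by
  have h := monotoneOn_mul_cosh_sub_sinh (Set.mem_Ici.2 le_rfl) hy hy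
  simp only [zero_mul, sinh_zero, sub_zero] at h
  linarith

lemma monotoneOn_sq_div_two_sub_log_cosh :
    MonotoneOn (fun y => y ^ 2 / 2 - log (cosh y)) (Set.Ici 0) := by
  have hderiv (y : ℝ) :
      HasDerivAt (fun y => y ^ 2 / 2 - log (cosh y)) (y - sinh y / cosh y) y := by
    refine (((hasDerivAt_pow 2 y).div_const 2).sub
      ((hasDerivAt_cosh y).log (cosh_pos y).ne')).congr_deriv ?_
    simp
  refine monotoneOn_of_deriv_nonneg (convex_Ici 0)
    (fun y _ => (hderiv y).continuousAt.continuousWithinAt)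
    (fun y _ => (hderiv y).differentiableAt.differentiableWithinAt) fun y hy => ?_
  rw [interior_Ici, Set.mem_Ioi] at hy
  rw [(hderiv y).deriv, sub_nonneg, div_le_iff₀ (cosh_pos y)]
  exact sinh_le_mul_cosh hy.le

lemma mul_sq_le_phase {r y : ℝ} (hr : r ∈ Set.Ioo 0 (π / 2)) (hy : cos r * cosh y ≤ 1) :
    cos r * (logCosDefect r / r) * y ^ 2 ≤ phase r y := by
  have hc := cos_pos_of_mem_Ioo_zero_pi_div_two hr
  rw [phase_of_le_one hy]
  set δ := arccos (cos r * cosh y)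
  have hcos : cos δ = cos r * cosh y :=
    cos_arccos (by linarith [mul_pos hc (cosh_pos y)]) hy
  have hδr : δ ≤ r := by
    rw [← arccos_cos hr.1.le (by linarith [hr.2, pi_pos])]
    exact arccos_le_arccos (le_mul_of_one_le_right hc.le (one_le_cosh y))
  have hdefect : logCosDefect r - logCosDefect δ = log (cosh y) + δ ^ 2 / 2 - r ^ 2 / 2 := by
    rw [logCosDefect, logCosDefect, hcos, log_mul hc.ne' (cosh_pos y).ne']; ring
  have hlog : log (cosh y) ≤ y ^ 2 / 2 :=
    (log_le_iff_le_exp (cosh_pos y)).2 (cosh_le_exp_half_sq y)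
  have hgap : cos r * (y ^ 2 / 2) ≤ r - δ := by
    have hlip := (le_abs_self _).trans (abs_cos_sub_cos_le δ r)
    rw [abs_sub_comm δ r, abs_of_nonneg (sub_nonneg.2 hδr), hcos] at hlip
    nlinarith [one_add_sq_div_two_le_cosh y]
  have hslope : cos r * (y ^ 2 / 2) * (logCosDefect r / r) ≤ (r - δ) * (logCosDefect r / r) := by
    have := (div_pos (logCosDefect_pos hr) hr.1).le
    gcongr
  linarith [sub_mul_logCosDefect_div_le hr (arccos_nonneg _) hδr]

lemma two_mul_logCosDefect_le_phase {r y : ℝ} (hr : 0 < cos r) (hy : 1 < cos r * cosh y) :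
    2 * logCosDefect r ≤ phase r y := by
  rw [phase_of_one_lt hy, logCosDefect]
  set η := arcosh (cos r * cosh y)
  have hη : 0 ≤ η := (arcosh_pos hy).le
  have hcosh : cosh η = cos r * cosh y := cosh_arcosh hy.le
  have hle : η ≤ |y| := by
    have : cosh η ≤ cosh y := hcosh.trans_le (mul_le_of_le_one_left (cosh_pos y).le (cos_le_one r))
    rwa [cosh_le_cosh, abs_of_nonneg hη] at this
  have hmono := monotoneOn_sq_div_two_sub_log_cosh hη (Set.mem_Ici.2 (abs_nonneg y)) hle
  simp only [cosh_abs, sq_abs, hcosh, log_mul hr.ne' (cosh_pos y).ne'] at hmono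
  linarith

lemma neg_log_cos_mul_abs_le_phase {r y : ℝ} (hr : 0 < cos r) (hy : 1 < cos r * cosh y) :
    2 * -log (cos r) * |y| - log (cos r) ^ 2 - r ^ 2 ≤ phase r y := by
  rw [phase_of_one_lt hy]
  set η := arcosh (cos r * cosh y)
  set a := -log (cos r) with ha
  have ha₀ : 0 ≤ a := neg_nonneg.2 (log_nonpos hr.le (cos_le_one r))
  have hexp : cos r = cosh a - sinh a := by rw [cosh_sub_sinh, ha, neg_neg, exp_log hr]
  have hcosh : cosh η ≤ cosh (|y| - a) := by
    rw [cosh_arcosh hy.le, cosh_sub, ← cosh_abs y, hexp]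
    nlinarith [sinh_lt_cosh |y|, sinh_nonneg_iff.2 ha₀]
  have hsq := sq_le_sq.2 (cosh_le_cosh.1 hcosh)
  have hlog : log (cos r) ^ 2 = a ^ 2 := by rw [ha, neg_sq]
  rw [hlog]
  linarith [sub_sq |y| a, sq_abs y]

lemma exists_pos_mul_abs_le_phase {r : ℝ} (hr : r ∈ Set.Ioo 0 (π / 2)) :
    ∃ κ > 0, ∀ y, 1 < cos r * cosh y → κ * |y| ≤ phase r y := by
  have hc := cos_pos_of_mem_Ioo_zero_pi_div_two hr
  have hW := logCosDefect_pos hr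
  set a := -log (cos r) with ha
  have ha₀ : 0 < a := by
    rw [logCosDefect] at hW; nlinarith [sq_nonneg r]
  set Y := (a ^ 2 + r ^ 2) / a
  have hYa : a * Y = a ^ 2 + r ^ 2 := mul_div_cancel₀ _ ha₀.ne'
  have hY₀ : 0 < Y := by positivity
  refine ⟨min a (2 * logCosDefect r / Y), by positivity, fun y hy => ?_⟩
  rcases le_or_gt |y| Y with hle | hlt
  · calc min a (2 * logCosDefect r / Y) * |y| ≤ 2 * logCosDefect r / Y * Y := by
          gcongr; exact min_le_right _ _
      _ = 2 * logCosDefect r := div_mul_cancel₀ _ hY₀.ne'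
      _ ≤ phase r y := two_mul_logCosDefect_le_phase hc hy
  · calc min a (2 * logCosDefect r / Y) * |y| ≤ a * |y| := by
          gcongr; exact min_le_left _ _
      _ ≤ 2 * a * |y| - log (cos r) ^ 2 - r ^ 2 := by
          have hlog : log (cos r) ^ 2 = a ^ 2 := by rw [ha, neg_sq]
          nlinarith [hlog]
      _ ≤ phase r y := neg_log_cos_mul_abs_le_phase hc hy

theorem exists_pos_mul_min_le_phase {r : ℝ} (hr : r ∈ Set.Ioo 0 (π / 2)) :
    ∃ κ > 0, ∀ y, κ * min (y ^ 2) |y| ≤ phase r y := by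
  have hc := cos_pos_of_mem_Ioo_zero_pi_div_two hr
  have hquad : 0 < cos r * (logCosDefect r / r) :=
    mul_pos hc (div_pos (logCosDefect_pos hr) hr.1)
  obtain ⟨κ, hκ₀, hκ⟩ := exists_pos_mul_abs_le_phase hr
  refine ⟨min (cos r * (logCosDefect r / r)) κ, lt_min hquad hκ₀, fun y => ?_⟩
  rcases le_or_gt (cos r * cosh y) 1 with hle | hlt
  · refine le_trans ?_ (mul_sq_le_phase hr hle)
    gcongr
    exacts [min_le_left _ _, min_le_left _ _]
  · refine le_trans ?_ (hκ y hlt)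
    gcongr
    exacts [min_le_right _ _, min_le_right _ _]

end Phase

section LaplaceMethod

/-- The integrand representing `heatP t r 0` in `integral_gaussian_mul_riemannianHeatKernel`,
normalised so that it converges as `t → 0⁺` on the scale `y = √t * u`. -/
noncomputable def laplaceIntegrand (t r y : ℝ) : ℝ :=
  4 * t / √(π / t) * exp (r ^ 2 / (4 * t)) *
    (exp (-(1 / (4 * t)) * y ^ 2) * riemannianHeatKernel t (cos r * cosh y))

lemma measurable_laplaceIntegrand (t r : ℝ) : Measurable (laplaceIntegrand t r) := by
  have := measurable_riemannianHeatKernel t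
  unfold laplaceIntegrand
  fun_prop

lemma heatP_mul_eq_integral_laplaceIntegrand {t r : ℝ} (ht : 0 < t) (hr : 0 < cos r) :
    heatP t r 0 * (4 * t ^ ((3 : ℝ) / 2) / √π) * exp (r ^ 2 / (4 * t)) =
      (√(4 * π))⁻¹ * ∫ u, laplaceIntegrand t r (√t * u) := by
  have hpow : t ^ ((3 : ℝ) / 2) = t * √t := by
    rw [sqrt_eq_rpow, ← rpow_one_add' ht.le (by norm_num)]; norm_num
  rw [Measure.integral_comp_mul_left (laplaceIntegrand t r)]
  simp only [laplaceIntegrand]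
  rw [integral_const_mul, integral_gaussian_mul_riemannianHeatKernel ht hr, smul_eq_mul,
    abs_of_pos (by positivity), hpow, sqrt_mul (by positivity) t, sqrt_div pi_pos.le]
  field_simp

lemma ofReal_laplaceIntegrand {t r y : ℝ} (ht : 0 < t) (hr : 0 < cos r)
    (hy : cos r * cosh y ≠ 1) :
    (laplaceIntegrand t r y : ℂ) = (exp t * exp (-phase r y / (4 * t)) : ℝ) *
      (imageSum t (complexArccos (cos r * cosh y)) /
        Complex.sin (complexArccos (cos r * cosh y))) := by
  have hx : -1 < cos r * cosh y := by linarith [mul_pos hr (cosh_pos y)]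
  have hsq := ofReal_re_complexArccos_sq (cos r * cosh y)
  have hkernel := riemannianHeatKernel_mul_sin ht (cos_complexArccos hx.le)
  rw [← hsq] at hkernel
  have hsin := sin_complexArccos_ne_zero hx hy
  have hphase : -phase r y / (4 * t) = r ^ 2 / (4 * t) + -(1 / (4 * t)) * y ^ 2 +
      -(complexArccos (cos r * cosh y) ^ 2).re / (4 * t) := by
    rw [phase]; ring
  set δ := complexArccos (cos r * cosh y)
  have hsqrt : (√(π / t) : ℂ) ≠ 0 := by exact_mod_cast (by positivity : √(π / t) ≠ 0)
  have ht' : (t : ℂ) ≠ 0 := by exact_mod_cast ht.ne'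
  rw [← mul_div_assoc, eq_div_iff hsin, laplaceIntegrand, hphase, exp_add, exp_add]
  push_cast at hkernel ⊢
  rw [mul_assoc, mul_assoc _ _ (Complex.sin δ), hkernel]
  field_simp

lemma norm_imageSum_div_sin_le {t x : ℝ} (ht : 0 < t) (hx : 0 ≤ x) :
    ‖imageSum t (complexArccos x) / Complex.sin (complexArccos x)‖ ≤
      π / 2 * (1 + imageError t) := by
  have hδ := norm_complexArccos_le hx
  have herror := norm_imageSum_sub_le ht (abs_re_complexArccos_le hx)
  set δ := complexArccos x
  have hE := imageError_nonneg ht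
  rw [norm_div]
  refine div_le_of_le_mul₀ (norm_nonneg _) (by positivity) ?_
  calc ‖imageSum t δ‖ ≤ ‖δ‖ + ‖imageSum t δ - δ‖ := norm_le_norm_add_norm_sub' _ _
    _ ≤ ‖δ‖ * (1 + imageError t) := by linarith
    _ ≤ π / 2 * ‖Complex.sin δ‖ * (1 + imageError t) := by gcongr
    _ = π / 2 * (1 + imageError t) * ‖Complex.sin δ‖ := by ring

lemma mul_min_sq_abs_le {t : ℝ} (ht₀ : 0 ≤ t) (ht₁ : t ≤ 1) (u : ℝ) :
    t * min (u ^ 2) |u| ≤ min ((√t * u) ^ 2) |√t * u| := by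
  have hle : t ≤ √t := le_sqrt_of_sq_le (by nlinarith)
  rw [mul_min_of_nonneg _ _ ht₀, mul_pow, sq_sqrt ht₀, abs_mul, abs_of_nonneg (sqrt_nonneg t)]
  gcongr

lemma abs_sub_le_min_sq_abs (u : ℝ) : |u| - 1 / 4 ≤ min (u ^ 2) |u| :=
  le_min (by nlinarith [sq_abs u, sq_nonneg (|u| - 1 / 2)]) (by linarith)

lemma exists_norm_laplaceIntegrand_le {r : ℝ} (hr : r ∈ Set.Ioo 0 (π / 2)) :
    ∃ κ > 0, ∃ C, ∀ t ∈ Set.Ioc 0 1, imageError t ≤ 1 → ∀ u, cos r * cosh (√t * u) ≠ 1 →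
      ‖laplaceIntegrand t r (√t * u)‖ ≤ C * exp (-κ * |u|) := by
  have hc := cos_pos_of_mem_Ioo_zero_pi_div_two hr
  obtain ⟨κ, hκ₀, hκ⟩ := exists_pos_mul_min_le_phase hr
  refine ⟨κ / 4, by positivity, exp 1 * exp (κ / 16) * π, fun t ⟨ht₀, ht₁⟩ hE u hu => ?_⟩
  have hphase : t * (κ * (|u| - 1 / 4)) ≤ phase r (√t * u) :=
    calc t * (κ * (|u| - 1 / 4)) ≤ κ * (t * min (u ^ 2) |u|) := by
          rw [mul_left_comm]; gcongr; exact abs_sub_le_min_sq_abs u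
      _ ≤ κ * min ((√t * u) ^ 2) |√t * u| := by gcongr; exact mul_min_sq_abs_le ht₀.le ht₁ u
      _ ≤ phase r (√t * u) := hκ _
  have hexp : -phase r (√t * u) / (4 * t) ≤ κ / 16 + -(κ / 4) * |u| := by
    rw [div_le_iff₀ (by positivity)]; linarith
  have hratio := norm_imageSum_div_sin_le ht₀ (mul_pos hc (cosh_pos (√t * u))).le
  rw [← Complex.norm_real, ofReal_laplaceIntegrand ht₀ hc hu, norm_mul, Complex.norm_real,
    norm_of_nonneg (by positivity)]
  calc _ ≤ exp 1 * exp (κ / 16 + -(κ / 4) * |u|) * (π / 2 * (1 + 1)) := by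
        gcongr; exact hratio.trans (by gcongr)
    _ = exp 1 * exp (κ / 16) * π * exp (-(κ / 4) * |u|) := by rw [exp_add]; ring

lemma hasDerivWithinAt_cosh_sqrt_mul (u : ℝ) :
    HasDerivWithinAt (fun t => cosh (√t * u)) (u ^ 2 / 2) (Set.Ioi 0) 0 := by
  have hexp : HasDerivWithinAt (fun t => exp (t * (u ^ 2 / 2))) (u ^ 2 / 2) (Set.Ioi 0) 0 := by
    simpa using ((hasDerivAt_id (0 : ℝ)).mul_const (u ^ 2 / 2)).exp.hasDerivWithinAt
  rw [hasDerivWithinAt_iff_tendsto_slope' Set.self_notMem_Ioi] at hexp ⊢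
  refine tendsto_of_tendsto_of_tendsto_of_le_of_le' tendsto_const_nhds hexp ?_ ?_
  all_goals
    filter_upwards [self_mem_nhdsWithin] with t (ht : 0 < t)
    have hsq : (√t * u) ^ 2 / 2 = t * (u ^ 2 / 2) := by rw [mul_pow, sq_sqrt ht.le]; ring
    simp only [slope_def_field, sqrt_zero, zero_mul, cosh_zero, exp_zero, sub_zero]
  · rw [le_div_iff₀ ht]
    linarith [one_add_sq_div_two_le_cosh (√t * u)]
  · gcongr
    exact hsq ▸ cosh_le_exp_half_sq (√t * u)

lemma tendsto_cos_mul_cosh_sqrt_mul (r u : ℝ) :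
    Tendsto (fun t => cos r * cosh (√t * u)) (𝓝[>] 0) (𝓝 (cos r)) := by
  have hcosh := (hasDerivWithinAt_cosh_sqrt_mul u).continuousWithinAt.tendsto.const_mul (cos r)
  simpa using hcosh

variable {r : ℝ}

lemma eventually_cos_mul_cosh_sqrt_mul_lt_one (hr : r ∈ Set.Ioo 0 π) (u : ℝ) :
    ∀ᶠ t in 𝓝[>] 0, cos r * cosh (√t * u) < 1 :=
  (tendsto_cos_mul_cosh_sqrt_mul r u).eventually_lt_const <| by
    simpa using cos_lt_cos_of_nonneg_of_le_pi le_rfl hr.2.le hr.1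

lemma hasDerivAt_arccos_sq_cos (hr : r ∈ Set.Ioo 0 π) :
    HasDerivAt (fun x => arccos x ^ 2) (-(2 * r / sin r)) (cos r) := by
  have hsin : 0 < sin r := sin_pos_of_mem_Ioo hr
  have hne : cos r ≠ -1 ∧ cos r ≠ 1 := by
    constructor <;> intro h <;> nlinarith [sin_sq_add_cos_sq r]
  refine ((hasDerivAt_arccos hne.1 hne.2).pow 2).congr_deriv ?_
  rw [arccos_cos hr.1.le hr.2.le, ← sin_sq, sqrt_sq hsin.le]
  field_simp
  norm_num

lemma tendsto_phase_sqrt_mul_div (hr : r ∈ Set.Ioo 0 π) (u : ℝ) :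
    Tendsto (fun t => phase r (√t * u) / t) (𝓝[>] 0)
      (𝓝 ((1 - r * (cos r / sin r)) * u ^ 2)) := by
  have harccos := hasDerivAt_arccos_sq_cos hr
  rw [← mul_one (cos r), ← cosh_zero, ← zero_mul u, ← sqrt_zero] at harccos
  have hslope := harccos.comp_hasDerivWithinAt (0 : ℝ)
    ((hasDerivWithinAt_cosh_sqrt_mul u).const_mul (cos r))
  rw [hasDerivWithinAt_iff_tendsto_slope' Set.self_notMem_Ioi] at hslope
  have hlimit : (1 - r * (cos r / sin r)) * u ^ 2 =
      u ^ 2 + -(2 * r / sin r) * (cos r * (u ^ 2 / 2)) := by ring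
  rw [hlimit]
  refine (hslope.const_add (u ^ 2)).congr' ?_
  filter_upwards [self_mem_nhdsWithin, eventually_cos_mul_cosh_sqrt_mul_lt_one hr u]
    with t (ht : 0 < t) hlt
  simp only [slope_def_field, Function.comp_apply, sqrt_zero, zero_mul, cosh_zero, mul_one,
    arccos_cos hr.1.le hr.2.le, sub_zero]
  rw [phase_of_le_one hlt.le, mul_pow, sq_sqrt ht.le]
  field_simp
  ring

lemma tendsto_complexArccos_cos_mul_cosh_sqrt_mul (hr : r ∈ Set.Ioo 0 π) (u : ℝ) :
    Tendsto (fun t => complexArccos (cos r * cosh (√t * u))) (𝓝[>] 0) (𝓝 r) := by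
  have harccos := (Complex.continuous_ofReal.comp continuous_arccos).continuousAt.tendsto.comp
    (tendsto_cos_mul_cosh_sqrt_mul r u)
  simp only [Function.comp_def, arccos_cos hr.1.le hr.2.le] at harccos
  refine harccos.congr' ?_
  filter_upwards [eventually_cos_mul_cosh_sqrt_mul_lt_one hr u] with t hlt
  rw [complexArccos_of_le_one hlt.le]

lemma tendsto_imageSum {δ : ℝ → ℂ} {δ₀ : ℂ} (hδ : Tendsto δ (𝓝[>] 0) (𝓝 δ₀))
    (hre : ∀ t, |(δ t).re| ≤ π / 2) :
    Tendsto (fun t => imageSum t (δ t)) (𝓝[>] 0) (𝓝 δ₀) := by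
  have herror : Tendsto (fun t => imageSum t (δ t) - δ t) (𝓝[>] 0) (𝓝 0) := by
    have hbound := hδ.norm.mul tendsto_imageError
    rw [mul_zero] at hbound
    refine squeeze_zero_norm' ?_ hbound
    filter_upwards [self_mem_nhdsWithin] with t ht
    exact norm_imageSum_sub_le ht (hre t)
  simpa using herror.add hδ

lemma tendsto_laplaceIntegrand (hr : r ∈ Set.Ioo 0 (π / 2)) (u : ℝ) :
    Tendsto (fun t => laplaceIntegrand t r (√t * u)) (𝓝[>] 0)
      (𝓝 (r / sin r * exp (-((1 - r * (cos r / sin r)) / 4) * u ^ 2))) := by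
  have hc := cos_pos_of_mem_Ioo_zero_pi_div_two hr
  have hrπ : r ∈ Set.Ioo 0 π := ⟨hr.1, by linarith [hr.2, pi_pos]⟩
  have hexp : Tendsto (fun t => exp t * exp (-phase r (√t * u) / (4 * t))) (𝓝[>] 0)
      (𝓝 (exp 0 * exp (-((1 - r * (cos r / sin r)) / 4) * u ^ 2))) := by
    refine ((continuous_exp.tendsto 0).mono_left nhdsWithin_le_nhds).mul
      ((continuous_exp.tendsto _).comp ?_)
    convert (tendsto_phase_sqrt_mul_div hrπ u).const_mul (-(1 / 4)) using 2 <;> ring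
  have hδ := tendsto_complexArccos_cos_mul_cosh_sqrt_mul hrπ u
  have hsum := tendsto_imageSum hδ fun t => abs_re_complexArccos_le (by positivity)
  have hsin : Complex.sin r ≠ 0 := by exact_mod_cast (sin_pos_of_mem_Ioo hrπ).ne'
  have hprod := (Complex.continuous_ofReal.continuousAt.tendsto.comp hexp).mul
    (hsum.div (Complex.continuous_sin.continuousAt.tendsto.comp hδ) hsin)
  rw [← Filter.tendsto_ofReal_iff]
  convert hprod.congr' ?_ using 2
  · rw [exp_zero, one_mul, mul_comm (r / sin r)]
    push_cast
    rfl
  · filter_upwards [self_mem_nhdsWithin, eventually_cos_mul_cosh_sqrt_mul_lt_one hrπ u]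
      with t ht hlt
    exact (ofReal_laplaceIntegrand ht hc hlt.ne).symm

lemma integrable_exp_neg_mul_abs {a : ℝ} (ha : 0 < a) : Integrable fun u => exp (-a * |u|) := by
  refine not_imp_comm.1 integral_undef ?_
  rw [integral_comp_abs (f := fun x => exp (-a * x)), integral_exp_mul_Ioi (by linarith)]
  simp [ha.ne']

lemma ae_mul_cosh_mul_ne (c : ℝ) {s d : ℝ} (hs : s ≠ 0) (hd : d ≠ 0) :
    ∀ᵐ u, c * cosh (s * u) ≠ d := by
  suffices hcountable : {u | c * cosh (s * u) = d}.Countable from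
    compl_mem_ae_iff.2 (hcountable.measure_zero _)
  rcases Set.eq_empty_or_nonempty {u | c * cosh (s * u) = d} with hempty | ⟨v, hv⟩
  · exact hempty ▸ Set.countable_empty
  · refine (Set.toFinite {v, -v}).countable.mono fun w hw => ?_
    have hc : c ≠ 0 := fun h => hd (by rw [← hv, h, zero_mul])
    have hcosh : cosh (s * w) = cosh (s * v) := mul_left_cancel₀ hc (hw.trans hv.symm)
    have habs : |s * w| = |s * v| := (cosh_le_cosh.1 hcosh.le).antisymm (cosh_le_cosh.1 hcosh.ge)
    rw [abs_mul, abs_mul] at habs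
    exact abs_eq_abs.1 (mul_left_cancel₀ (abs_ne_zero.2 hs) habs)

theorem tendsto_integral_laplaceIntegrand (hr : r ∈ Set.Ioo 0 (π / 2)) :
    Tendsto (fun t => ∫ u, laplaceIntegrand t r (√t * u)) (𝓝[>] 0)
      (𝓝 (∫ u, r / sin r * exp (-((1 - r * (cos r / sin r)) / 4) * u ^ 2))) := by
  obtain ⟨κ, hκ, C, hbound⟩ := exists_norm_laplaceIntegrand_le hr
  refine tendsto_integral_filter_of_dominated_convergence (fun u => C * exp (-κ * |u|)) ?_ ?_
    ((integrable_exp_neg_mul_abs hκ).const_mul C)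
    (Eventually.of_forall (tendsto_laplaceIntegrand hr))
  · exact Eventually.of_forall fun t =>
      ((measurable_laplaceIntegrand t r).comp (measurable_const_mul _)).aestronglyMeasurable
  · filter_upwards [Ioc_mem_nhdsGT one_pos, tendsto_imageError.eventually_le_const one_pos]
      with t ht hE
    filter_upwards [ae_mul_cosh_mul_ne (cos r) (sqrt_pos.2 ht.1).ne' one_ne_zero] with u hu
    exact hbound t ht hE u hu

lemma one_sub_mul_cot_pos (hr : r ∈ Set.Ioo 0 (π / 2)) : 0 < 1 - r * (cos r / sin r) := by
  have hc := cos_pos_of_mem_Ioo_zero_pi_div_two hr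
  have hs : 0 < sin r := sin_pos_of_mem_Ioo ⟨hr.1, by linarith [hr.2, pi_pos]⟩
  have htan := lt_tan hr.1 hr.2
  rw [tan_eq_sin_div_cos, lt_div_iff₀ hc] at htan
  rwa [← mul_div_assoc, sub_pos, div_lt_one hs]

lemma inv_sqrt_mul_integral_gaussian {b : ℝ} (hb : 0 < b) :
    (√(4 * π))⁻¹ * ∫ u, exp (-(b / 4) * u ^ 2) = b ^ (-(1 : ℝ) / 2) := by
  rw [integral_gaussian, show π / (b / 4) = 4 * π / b by field_simp, sqrt_div (by positivity),
    neg_div, rpow_neg hb.le, ← sqrt_eq_rpow]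
  field_simp

end LaplaceMethod

/-- Small-time asymptotics off the cut-locus at `z = 0`: for fixed `r ∈ (0, π/2)`,
`p_t(r,0) ~ (r/sin r) (1 - r cot r)^{-1/2} (√π/(4 t^{3/2})) e^{-r²/(4t)}` as `t → 0⁺`. -/
theorem stmt_12 (r : ℝ) (hr : r ∈ Set.Ioo 0 (Real.pi / 2)) :
    Filter.Tendsto
      (fun t : ℝ =>
        heatP t r 0 * (4 * t ^ ((3 : ℝ) / 2) / Real.sqrt Real.pi) * Real.exp (r ^ 2 / (4 * t)))
      (nhdsWithin 0 (Set.Ioi 0))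
      (nhds ((r / Real.sin r) *
        (1 - r * (Real.cos r / Real.sin r)) ^ (-(1 : ℝ) / 2))) := by
  have hlimit := (tendsto_integral_laplaceIntegrand hr).const_mul (√(4 * π))⁻¹
  rw [integral_const_mul, mul_left_comm,
    inv_sqrt_mul_integral_gaussian (one_sub_mul_cot_pos hr)] at hlimit
  have hc := cos_pos_of_mem_Ioo_zero_pi_div_two hr
  refine hlimit.congr' ?_
  filter_upwards [self_mem_nhdsWithin] with t ht
  exact (heatP_mul_eq_integral_laplaceIntegrand ht hc).symm
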